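/- For α > 0 and f a measurable function on (0,∞) such that ∫₁^∞ |f(s)| s^{2α-1} ds < ∞, the composition formula t · I^α_{-,2}( s^{-2α-1} (I^α_{-,2} f)(s) )(t) = 2^{2α} (I^{2α}_- f)(t) holds for almost every t > 0, expressing a composition of Erdélyi–Kober type integrals as a single Riemann–Liouville integral. -/

import Mathlib

/-!
Exchanging the order of integration in the composition leaves the kernel
`K(u, t) = ∫_t^u s^{-2α} (s² - t²)^{α-1} (u² - s²)^{α-1} ds`. The algebraic identity
`(s² - t²)(u² - s²)/s² = (u - t)² - (s - ut/s)²` writes its integrand as `s^{-2} g(s - ut/s)` with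
`g` even. The involution `s ↦ ut/s` lets `s^{-2}` be replaced by the average
`(s^{-2} + 1/(ut))/2`, which is a multiple of the derivative of `s - ut/s`, so `K` becomes a Beta
integral (`ek_kernel_integral`):
`K(u, t) = 4^{α-1} B(α, α) (u - t)^{2α-1} / (ut)`.

Since the kernel is nonnegative, Fubini applies at every `t` for which
`u ↦ f(u) (u - t)^{2α-1}` is integrable on `(t, ∞)` (`ek_comp_of_integrable`). This holds for almost
every `t > 0` (`ae_rl_integrable`): near `t` by convolution of integrable functions, and for
`u ≥ 2t` because `(u - t)^{2α-1}` is then comparable to `u^{2α-1}`.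
-/

open MeasureTheory Real Set

/-- Right-sided modified Erdélyi–Kober fractional integral of order `α`. -/
noncomputable def EKminus (α : ℝ) (f : ℝ → ℝ) (t : ℝ) : ℝ :=
  2 * (Real.Gamma α)⁻¹ * ∫ s in Ioi t, f s * s * (s ^ 2 - t ^ 2) ^ (α - 1)

/-- Right-sided Riemann–Liouville fractional integral of order `α`. -/
noncomputable def RLminus (α : ℝ) (g : ℝ → ℝ) (t : ℝ) : ℝ :=
  (Real.Gamma α)⁻¹ * ∫ s in Ioi t, g s * (s - t) ^ (α - 1)

lemma integral_beta_diag (α : ℝ) (hα : 0 < α) :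
    IntegrableOn (fun y : ℝ => (y * (1 - y)) ^ (α - 1)) (Ioo 0 1) ∧
      ∫ y in Ioo (0 : ℝ) 1, (y * (1 - y)) ^ (α - 1) = ProbabilityTheory.beta α α := by
  have hc := Complex.betaIntegral_convergent (u := (α : ℂ)) (v := (α : ℂ)) (by simpa) (by simpa)
  rw [intervalIntegrable_iff_integrableOn_Ioo_of_le (by simp)] at hc
  have hpt : ∀ y ∈ Ioo (0 : ℝ) 1,
      RCLike.re ((y : ℂ) ^ ((α : ℂ) - 1) * (1 - (y : ℂ)) ^ ((α : ℂ) - 1))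
        = (y * (1 - y)) ^ (α - 1) := by
    intro y hy
    have h1 : (0 : ℝ) ≤ 1 - y := by linarith [hy.2]
    rw [mul_rpow hy.1.le h1]
    have : (y : ℂ) ^ ((α : ℂ) - 1) * (1 - (y : ℂ)) ^ ((α : ℂ) - 1)
        = ((y ^ (α - 1) * (1 - y) ^ (α - 1) : ℝ) : ℂ) := by
      push_cast
      rw [Complex.ofReal_cpow hy.1.le, Complex.ofReal_cpow h1]
      push_cast
      rfl
    rw [this]
    simp
  refine ⟨IntegrableOn.congr_fun hc.re hpt measurableSet_Ioo, ?_⟩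
  rw [← setIntegral_congr_fun measurableSet_Ioo hpt, integral_re hc,
    ProbabilityTheory.beta_eq_betaIntegralReal α α hα hα, Complex.betaIntegral,
    intervalIntegral.integral_of_le (by norm_num), integral_Ioc_eq_integral_Ioo]
  rfl

/-- The substitution `y = (s - ut/s + (u - t)) / (2(u - t))` turns the weight
`(s² - t²)(u² - s²)/s² = (u - t)² - (s - ut/s)²` into `4(u - t)² y(1 - y)`. -/
lemma weight_eq {t u s : ℝ} (α : ℝ) (ht : 0 < t) (hs : s ∈ Ioo t u) :
    ((s ^ 2 - t ^ 2) * (u ^ 2 - s ^ 2) / s ^ 2) ^ (α - 1)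
      = (4 * (u - t) ^ 2) ^ (α - 1) *
        ((s - u * t / s + (u - t)) / (2 * (u - t)) *
          (1 - (s - u * t / s + (u - t)) / (2 * (u - t)))) ^ (α - 1) := by
  obtain ⟨h1, h2⟩ := hs
  have hs0 : 0 < s := ht.trans h1
  have hd : 0 < u - t := by linarith
  have key : (s ^ 2 - t ^ 2) * (u ^ 2 - s ^ 2) / s ^ 2 = (4 * (u - t) ^ 2) *
        ((s - u * t / s + (u - t)) / (2 * (u - t)) *
          (1 - (s - u * t / s + (u - t)) / (2 * (u - t)))) := by
    field_simp
    ring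
  rw [← mul_rpow (by positivity), ← key]
  have hpos : 0 < (s ^ 2 - t ^ 2) * (u ^ 2 - s ^ 2) / s ^ 2 := by
    have : 0 < s ^ 2 - t ^ 2 := by nlinarith
    have : 0 < u ^ 2 - s ^ 2 := by nlinarith
    positivity
  rw [key] at hpos
  exact (pos_of_mul_pos_right hpos (by positivity)).le

/-- The factor `1 + ut/s²` is, up to `2(u - t)`, the derivative of the substitution in `weight_eq`,
which maps `(t, u)` increasingly onto `(0, 1)`; hence the Beta integral. -/
lemma weight_integral_sum (α : ℝ) (hα : 0 < α) {t u : ℝ} (ht : 0 < t) (htu : t < u) :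
    IntegrableOn (fun s : ℝ => (1 + u * t / s ^ 2) *
        ((s ^ 2 - t ^ 2) * (u ^ 2 - s ^ 2) / s ^ 2) ^ (α - 1)) (Ioo t u) ∧
      ∫ s in Ioo t u, (1 + u * t / s ^ 2) *
        ((s ^ 2 - t ^ 2) * (u ^ 2 - s ^ 2) / s ^ 2) ^ (α - 1)
        = 2 * (u - t) * (4 * (u - t) ^ 2) ^ (α - 1) * ProbabilityTheory.beta α α := by
  have hd : 0 < u - t := by linarith
  have hu : 0 < u := ht.trans htu
  set φ : ℝ → ℝ := fun s => (s - u * t / s + (u - t)) / (2 * (u - t)) with hφ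
  have hder : ∀ s ∈ Icc t u, HasDerivAt φ ((1 + u * t / s ^ 2) / (2 * (u - t))) s := by
    intro s hs
    have hs0 : s ≠ 0 := (ht.trans_le hs.1).ne'
    have h := (((hasDerivAt_id s).sub ((hasDerivAt_const s (u * t)).div
      (hasDerivAt_id s) hs0)).add_const (u - t)).div_const (2 * (u - t))
    refine h.congr_deriv ?_
    simp
    ring
  have hdpos : ∀ s ∈ Icc t u, 0 < (1 + u * t / s ^ 2) / (2 * (u - t)) := by
    intro s hs
    have hs0 : 0 < s := (ht.trans_le hs.1)
    positivity
  have hcont : ContinuousOn φ (Icc t u) := fun s hs => (hder s hs).continuousAt.continuousWithinAt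
  have hmono : StrictMonoOn φ (Icc t u) := by
    refine strictMonoOn_of_deriv_pos (convex_Icc t u) hcont ?_
    intro s hs
    have hs' := interior_subset hs
    rw [(hder s hs').deriv]
    exact hdpos s hs'
  have hφt : φ t = 0 := by simp only [hφ]; field_simp; ring
  have hφu : φ u = 1 := by simp only [hφ]; field_simp; ring
  have himg : φ '' Ioo t u = Ioo 0 1 := by
    apply Subset.antisymm
    · rintro _ ⟨s, hs, rfl⟩
      have hs' := Ioo_subset_Icc_self hs
      rw [← hφt, ← hφu]
      exact ⟨hmono (left_mem_Icc.2 htu.le) hs' hs.1, hmono hs' (right_mem_Icc.2 htu.le) hs.2⟩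
    · have := intermediate_value_Ioo htu.le hcont
      rwa [hφt, hφu] at this
  have hder' : ∀ s ∈ Ioo t u,
      HasDerivWithinAt φ ((1 + u * t / s ^ 2) / (2 * (u - t))) (Ioo t u) s :=
    fun s hs => (hder s (Ioo_subset_Icc_self hs)).hasDerivWithinAt
  have hinj : InjOn φ (Ioo t u) := hmono.injOn.mono Ioo_subset_Icc_self
  obtain ⟨hb1, hb2⟩ := integral_beta_diag α hα
  rw [← himg, integrableOn_image_iff_integrableOn_abs_deriv_smul measurableSet_Ioo hder' hinj]
    at hb1
  rw [← himg, integral_image_eq_integral_abs_deriv_smul measurableSet_Ioo hder' hinj] at hb2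
  have hpt : ∀ s ∈ Ioo t u, 2 * (u - t) * (4 * (u - t) ^ 2) ^ (α - 1) *
      (|(1 + u * t / s ^ 2) / (2 * (u - t))| • (φ s * (1 - φ s)) ^ (α - 1))
      = (1 + u * t / s ^ 2) *
        ((s ^ 2 - t ^ 2) * (u ^ 2 - s ^ 2) / s ^ 2) ^ (α - 1) := by
    intro s hs
    rw [weight_eq α ht hs, abs_of_pos (hdpos s (Ioo_subset_Icc_self hs)), smul_eq_mul]
    change _ = _ * (_ * (φ s * (1 - φ s)) ^ (α - 1))
    generalize (φ s * (1 - φ s)) ^ (α - 1) = w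
    field_simp
  refine ⟨IntegrableOn.congr_fun (hb1.const_mul _) hpt measurableSet_Ioo, ?_⟩
  rw [← setIntegral_congr_fun measurableSet_Ioo hpt, integral_const_mul, hb2]

/-- The weight is invariant under the involution `s ↦ ut/s` of `(t, u)`. No integrability is needed,
since the change of variables formula holds also between undefined integrals. -/
lemma weight_integral_symm (α : ℝ) {t u : ℝ} (ht : 0 < t) (htu : t < u) :
    ∫ s in Ioo t u, ((s ^ 2 - t ^ 2) * (u ^ 2 - s ^ 2) / s ^ 2) ^ (α - 1)
      = ∫ s in Ioo t u, u * t / s ^ 2 *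
        ((s ^ 2 - t ^ 2) * (u ^ 2 - s ^ 2) / s ^ 2) ^ (α - 1) := by
  have hu : 0 < u := ht.trans htu
  have hmaps : ∀ s ∈ Ioo t u, u * t / s ∈ Ioo t u := by
    intro s hs
    have hs0 : 0 < s := ht.trans hs.1
    constructor
    · rw [lt_div_iff₀ hs0]; nlinarith [hs.2]
    · rw [div_lt_iff₀ hs0]; nlinarith [hs.1]
  have hinv : ∀ s ∈ Ioo t u, u * t / (u * t / s) = s := by
    intro s hs
    have hs0 : 0 < s := ht.trans hs.1
    field_simp
  have himg : (fun s => u * t / s) '' Ioo t u = Ioo t u := by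
    apply Subset.antisymm
    · rintro _ ⟨s, hs, rfl⟩
      exact hmaps s hs
    · intro s hs
      exact ⟨_, hmaps s hs, hinv s hs⟩
  have hinj : InjOn (fun s => u * t / s) (Ioo t u) := by
    intro a ha b hb hab
    rw [← hinv a ha, ← hinv b hb]
    simp only at hab
    rw [hab]
  have hder : ∀ s ∈ Ioo t u,
      HasDerivWithinAt (fun s => u * t / s) (-(u * t / s ^ 2)) (Ioo t u) s := by
    intro s hs
    have hs0 : s ≠ 0 := (ht.trans hs.1).ne'
    have h := (hasDerivAt_const s (u * t)).div (hasDerivAt_id s) hs0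
    refine (h.congr_deriv ?_).hasDerivWithinAt
    simp
    ring
  conv_lhs => rw [← himg]
  rw [integral_image_eq_integral_abs_deriv_smul measurableSet_Ioo hder hinj]
  refine setIntegral_congr_fun measurableSet_Ioo fun s hs => ?_
  have hs0 : 0 < s := ht.trans hs.1
  rw [abs_neg, abs_of_pos (by positivity), smul_eq_mul]
  congr 2
  field_simp

/-- The kernel of the composed operator: up to a Beta value, it is the Riemann–Liouville kernel of
order `2α` divided by `ut`. -/
lemma ek_kernel_integral (α : ℝ) (hα : 0 < α) {t u : ℝ} (ht : 0 < t) (htu : t < u) :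
    IntegrableOn (fun s : ℝ => s ^ (-(2 * α)) * (s ^ 2 - t ^ 2) ^ (α - 1) *
        (u ^ 2 - s ^ 2) ^ (α - 1)) (Ioo t u) ∧
      ∫ s in Ioo t u, s ^ (-(2 * α)) * (s ^ 2 - t ^ 2) ^ (α - 1) * (u ^ 2 - s ^ 2) ^ (α - 1)
        = 4 ^ (α - 1) * ProbabilityTheory.beta α α * (u - t) ^ (2 * α - 1) / (u * t) := by
  have hd : 0 < u - t := by linarith
  have hu : 0 < u := ht.trans htu
  obtain ⟨hI, hE⟩ := weight_integral_sum α hα ht htu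
  set W : ℝ → ℝ := fun s => ((s ^ 2 - t ^ 2) * (u ^ 2 - s ^ 2) / s ^ 2) ^ (α - 1) with hW
  have hWm : Measurable W := by fun_prop
  have hW0 : ∀ s ∈ Ioo t u, 0 ≤ W s := by
    intro s hs
    have hs0 : 0 < s := ht.trans hs.1
    have : 0 ≤ s ^ 2 - t ^ 2 := by nlinarith [hs.1]
    have : 0 ≤ u ^ 2 - s ^ 2 := by nlinarith [hs.2]
    simp only [hW]
    positivity
  have hpt : ∀ s ∈ Ioo t u, (u * t)⁻¹ * (u * t / s ^ 2 * W s)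
      = s ^ (-(2 * α)) * (s ^ 2 - t ^ 2) ^ (α - 1) * (u ^ 2 - s ^ 2) ^ (α - 1) := by
    intro s hs
    have hs0 : 0 < s := ht.trans hs.1
    have h1 : 0 ≤ s ^ 2 - t ^ 2 := by nlinarith [hs.1]
    have h2 : 0 ≤ u ^ 2 - s ^ 2 := by nlinarith [hs.2]
    simp only [hW]
    rw [div_rpow (by positivity) (by positivity), mul_rpow h1 h2]
    have h3 : (s ^ 2) ^ (α - 1) = s ^ (2 * α) / s ^ 2 := by
      rw [← rpow_natCast, ← rpow_mul hs0.le, ← rpow_sub hs0]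
      congr 1
      push_cast
      ring
    rw [h3, rpow_neg hs0.le]
    have : 0 < s ^ (2 * α) := rpow_pos_of_pos hs0 _
    field_simp
  have hI1 : IntegrableOn W (Ioo t u) := by
    refine Integrable.mono' hI hWm.aestronglyMeasurable ?_
    refine ae_restrict_of_forall_mem measurableSet_Ioo fun s hs => ?_
    rw [Real.norm_of_nonneg (hW0 s hs)]
    have : 0 ≤ u * t / s ^ 2 := by positivity
    nlinarith [hW0 s hs]
  have hI2 : IntegrableOn (fun s => u * t / s ^ 2 * W s) (Ioo t u) := by
    refine (hI.sub hI1).congr (ae_of_all _ fun s => ?_)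
    simp [hW]
    ring
  refine ⟨IntegrableOn.congr_fun (hI2.const_mul _) hpt measurableSet_Ioo, ?_⟩
  rw [← setIntegral_congr_fun measurableSet_Ioo hpt, integral_const_mul]
  -- The two summands of `1 + ut/s²` contribute equally, so each is half of the Beta integral.
  have hsym : ∫ s in Ioo t u, W s = ∫ s in Ioo t u, u * t / s ^ 2 * W s :=
    weight_integral_symm α ht htu
  have hsum : ∫ s in Ioo t u, (1 + u * t / s ^ 2) * W s
      = (∫ s in Ioo t u, W s) + ∫ s in Ioo t u, u * t / s ^ 2 * W s := by
    rw [← integral_add hI1 hI2]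
    congr 1
    ext s
    ring
  have hval : ∫ s in Ioo t u, u * t / s ^ 2 * W s
      = (u - t) * (4 * (u - t) ^ 2) ^ (α - 1) * ProbabilityTheory.beta α α := by
    rw [hsym] at hsum
    simp only [hW] at hsum hE ⊢
    linarith
  have hpow : (u - t) * (4 * (u - t) ^ 2) ^ (α - 1) = 4 ^ (α - 1) * (u - t) ^ (2 * α - 1) := by
    rw [mul_rpow (by norm_num) (by positivity), ← rpow_natCast (u - t), ← rpow_mul hd.le,
      show 2 * α - 1 = 1 + (2 : ℕ) * (α - 1) by push_cast; ring, rpow_add hd, rpow_one]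
    ring
  rw [hval, hpow]
  ring

lemma tail_bound (p : ℝ) {u t : ℝ} (ht : 0 ≤ t) (hu : 0 < u) (h : 2 * t ≤ u) :
    (u - t) ^ p ≤ (1 + (2⁻¹ : ℝ) ^ p) * u ^ p := by
  have h2 : u / 2 ≤ u - t := by linarith
  have e : (2⁻¹ : ℝ) ^ p * u ^ p = (u / 2) ^ p := by
    rw [← mul_rpow (by norm_num) hu.le]; congr 1; ring
  rw [add_mul, one_mul, e]
  have n1 : 0 ≤ u ^ p := by positivity
  have n2 : 0 ≤ (u / 2) ^ p := by positivity
  rcases le_total 0 p with hp | hp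
  · linarith [rpow_le_rpow (by linarith) (by linarith : u - t ≤ u) hp]
  · linarith [rpow_le_rpow_of_nonpos (by linarith) h2 hp]

/-- Local part of the Riemann–Liouville integral: on a bounded interval it is the convolution of two
integrable functions, hence converges absolutely almost everywhere. -/
lemma rl_integrable_near (p : ℝ) (hp : -1 < p) {f : ℝ → ℝ} {a b : ℝ}
    (hf : IntegrableOn f (Icc a b)) :
    ∀ᵐ t : ℝ, a < t → IntegrableOn (fun u => f u * (u - t) ^ p) (Ioc t b) := by
  have hk : IntegrableOn (fun x : ℝ => x ^ p) (Ioc 0 (b - a)) := by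
    rcases le_total 0 (b - a) with h | h
    · rw [← intervalIntegrable_iff_integrableOn_Ioc_of_le h]
      exact intervalIntegral.intervalIntegrable_rpow' hp
    · rw [Ioc_eq_empty (by linarith)]
      exact integrableOn_empty
  have h1 := (integrable_indicator_iff measurableSet_Icc).2 hf
  have h2 := ((integrable_indicator_iff measurableSet_Ioc).2 hk).comp_neg
  filter_upwards [h1.ae_convolution_exists (ContinuousLinearMap.mul ℝ ℝ) h2] with t ht hat
  have ht' : Integrable _ _ := ht
  refine (ht'.integrableOn (s := Ioc t b)).congr_fun (fun u hu => ?_) measurableSet_Ioc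
  have m1 : u ∈ Icc a b := ⟨by linarith [hu.1], hu.2⟩
  have m2 : -(t - u) ∈ Ioc 0 (b - a) := ⟨by linarith [hu.1], by linarith [hu.2]⟩
  simp only [ContinuousLinearMap.mul_apply']
  rw [indicator_of_mem m1, indicator_of_mem m2, neg_sub]

lemma ae_rl_integrable (α : ℝ) (hα : 0 < α) (f : ℝ → ℝ)
    (hmeas : Measurable f)
    (hloc : LocallyIntegrableOn f (Ioi (0 : ℝ)))
    (hint : IntegrableOn (fun s => |f s| * s ^ (2 * α - 1)) (Ioi (1 : ℝ))) :
    ∀ᵐ t : ℝ, 0 < t → IntegrableOn (fun u => f u * (u - t) ^ (2 * α - 1)) (Ioi t) := by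
  have h : ∀ᵐ t : ℝ, ∀ n : ℕ, 1 / ((n : ℝ) + 1) < t →
      IntegrableOn (fun u => f u * (u - t) ^ (2 * α - 1)) (Ioc t (2 * ((n : ℝ) + 1))) := by
    rw [ae_all_iff]
    intro n
    refine rl_integrable_near _ (by linarith) ?_
    refine hloc.integrableOn_compact_subset (fun x hx => ?_) isCompact_Icc
    have : 0 < 1 / ((n : ℝ) + 1) := by positivity
    exact this.trans_le hx.1
  filter_upwards [h] with t ht ht0
  -- Choose `n` with `1 / (n + 1) < t < n`; the split point `2(n + 1)` then exceeds both `2t` and `1`.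
  obtain ⟨n₁, hn₁⟩ := exists_nat_one_div_lt ht0
  obtain ⟨n₂, hn₂⟩ := exists_nat_gt t
  obtain ⟨n, hn1, hn2⟩ : ∃ n : ℕ, 1 / ((n : ℝ) + 1) < t ∧ t < n := by
    refine ⟨max n₁ n₂, lt_of_le_of_lt ?_ hn₁, hn₂.trans_le (by exact_mod_cast le_max_right _ _)⟩
    apply one_div_le_one_div_of_le (by positivity)
    have : (n₁ : ℝ) ≤ (max n₁ n₂ : ℕ) := by exact_mod_cast le_max_left _ _
    linarith
  have hn0 : (0 : ℝ) ≤ n := by positivity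
  rw [← Ioc_union_Ioi_eq_Ioi (show t ≤ 2 * ((n : ℝ) + 1) by linarith)]
  refine (ht n hn1).union ?_
  have hsub : Ioi (2 * ((n : ℝ) + 1)) ⊆ Ioi 1 := Ioi_subset_Ioi (by linarith)
  refine Integrable.mono' ((hint.mono_set hsub).const_mul (1 + (2⁻¹ : ℝ) ^ (2 * α - 1)))
    (by fun_prop) (ae_restrict_of_forall_mem measurableSet_Ioi fun u hu => ?_)
  have hu' : 2 * ((n : ℝ) + 1) < u := hu
  have hut : 0 ≤ u - t := by linarith
  rw [norm_mul, Real.norm_eq_abs, Real.norm_of_nonneg (by positivity)]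
  have := tail_bound (2 * α - 1) ht0.le (by linarith : 0 < u) (by linarith)
  nlinarith [abs_nonneg (f u)]

/-- The composition formula at every point where the Riemann–Liouville integral of order `2α`
converges absolutely: that is exactly the condition for exchanging the two integrals. -/
lemma ek_comp_of_integrable (α : ℝ) (hα : 0 < α) (f : ℝ → ℝ) (hmeas : Measurable f)
    {t : ℝ} (ht : 0 < t)
    (hint : IntegrableOn (fun u => f u * (u - t) ^ (2 * α - 1)) (Ioi t)) :
    t * EKminus α (fun s => s ^ (-(2 * α) - 1) * EKminus α f s) t
      = 2 ^ (2 * α) * RLminus (2 * α) f t := by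
  set k : ℝ → ℝ → ℝ := fun s u =>
    s ^ (-(2 * α)) * (s ^ 2 - t ^ 2) ^ (α - 1) * (u ^ 2 - s ^ 2) ^ (α - 1) with hk
  -- Extending by zero off `s < u` makes the domain of integration the product `(t, ∞) × (t, ∞)`.
  set F : ℝ → ℝ → ℝ := fun s u => if s < u then f u * u * k s u else 0 with hF
  set C : ℝ := 4 ^ (α - 1) * ProbabilityTheory.beta α α with hC
  have hC0 : 0 < C := mul_pos (by positivity) (ProbabilityTheory.beta_pos hα hα)
  have hFm : Measurable (Function.uncurry F) := by
    refine Measurable.ite (measurableSet_lt measurable_fst measurable_snd) ?_ measurable_const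
    simp only [hk]
    fun_prop
  have hFind : ∀ u, (fun s => F s u) = (Iio u).indicator (fun s => f u * u * k s u) := by
    intro u
    ext s
    simp [hF, indicator_apply]
  have hset : ∀ u, Iio u ∩ Ioi t = Ioo t u := fun u => by rw [inter_comm, Ioi_inter_Iio]
  have hsec : ∀ u ∈ Ioi t, IntegrableOn (fun s => F s u) (Ioi t) ∧
      ∫ s in Ioi t, F s u = (C / t) * (f u * (u - t) ^ (2 * α - 1)) ∧
      ∫ s in Ioi t, ‖F s u‖ = (C / t) * ‖f u * (u - t) ^ (2 * α - 1)‖ := by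
    intro u hu
    have htu : t < u := hu
    have hu0 : 0 < u := ht.trans hu
    obtain ⟨h1, h2⟩ := ek_kernel_integral α hα ht htu
    have hn : ∀ s ∈ Ioo t u, ‖f u * u * k s u‖ = |f u| * u * k s u := by
      intro s hs
      have hs0 : 0 < s := ht.trans hs.1
      have : 0 ≤ s ^ 2 - t ^ 2 := by nlinarith [hs.1]
      have : 0 ≤ u ^ 2 - s ^ 2 := by nlinarith [hs.2]
      have hk0 : 0 ≤ k s u := by simp only [hk]; positivity
      rw [norm_mul, norm_mul, Real.norm_of_nonneg hk0, Real.norm_of_nonneg hu0.le,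
        Real.norm_eq_abs]
    have hd : 0 ≤ u - t := by linarith
    refine ⟨?_, ?_, ?_⟩
    · rw [hFind, IntegrableOn, integrable_indicator_iff measurableSet_Iio, IntegrableOn,
        Measure.restrict_restrict measurableSet_Iio, hset]
      exact h1.const_mul _
    · rw [hFind, integral_indicator measurableSet_Iio,
        Measure.restrict_restrict measurableSet_Iio, hset, integral_const_mul]
      simp only [hk]
      rw [h2, ← hC]
      field_simp
    · have : (fun s => ‖F s u‖) = (Iio u).indicator (fun s => ‖f u * u * k s u‖) := by
        ext s
        rw [← norm_indicator_eq_indicator_norm, ← hFind]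
      rw [this, integral_indicator measurableSet_Iio,
        Measure.restrict_restrict measurableSet_Iio, hset,
        setIntegral_congr_fun measurableSet_Ioo hn, integral_const_mul]
      simp only [hk]
      rw [h2, ← hC, norm_mul, Real.norm_eq_abs, Real.norm_of_nonneg (by positivity)]
      field_simp
  have hprod : Integrable (Function.uncurry F)
      ((volume.restrict (Ioi t)).prod (volume.restrict (Ioi t))) := by
    rw [integrable_prod_iff' hFm.aestronglyMeasurable]
    refine ⟨ae_restrict_of_forall_mem measurableSet_Ioi fun u hu => (hsec u hu).1, ?_⟩
    exact IntegrableOn.congr_fun (hint.norm.const_mul (C / t)) (fun u hu => (hsec u hu).2.2.symm)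
      measurableSet_Ioi
  have hswap := integral_integral_swap hprod
  rw [setIntegral_congr_fun measurableSet_Ioi fun u hu => (hsec u hu).2.1, integral_const_mul]
    at hswap
  have hin : ∀ s ∈ Ioi t, s ^ (-(2 * α) - 1) * EKminus α f s * s * (s ^ 2 - t ^ 2) ^ (α - 1)
      = 2 * (Real.Gamma α)⁻¹ * ∫ u in Ioi t, F s u := by
    intro s hs
    have hs0 : 0 < s := ht.trans hs
    have e1 : (fun u => F s u) = (Ioi s).indicator (fun u =>
        (s ^ (-(2 * α)) * (s ^ 2 - t ^ 2) ^ (α - 1)) *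
          (f u * u * (u ^ 2 - s ^ 2) ^ (α - 1))) := by
      ext u
      simp only [hF, hk, indicator_apply, mem_Ioi]
      split_ifs
      · ring
      · rfl
    rw [e1, integral_indicator measurableSet_Ioi, Measure.restrict_restrict measurableSet_Ioi,
      inter_eq_left.2 (Ioi_subset_Ioi (le_of_lt hs)), integral_const_mul, EKminus,
      rpow_sub_one hs0.ne']
    field_simp
  have hG : Real.Gamma α ≠ 0 := (Real.Gamma_pos_of_pos hα).ne'
  have hpow : (2 : ℝ) ^ (2 * α) = 4 * 4 ^ (α - 1) := by
    rw [rpow_mul (by norm_num), rpow_sub_one (by norm_num)]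
    norm_num
    ring
  rw [EKminus, setIntegral_congr_fun measurableSet_Ioi hin, integral_const_mul, hswap, RLminus,
    hpow, hC, ProbabilityTheory.beta, ← two_mul]
  field_simp
  norm_num
  exact mul_comm _ _

/-- The composition formula `t · I^α_{-,2}( s^{-2α-1} (I^α_{-,2} f)(s) )(t) = 2^{2α} (I^{2α}_- f)(t)`
for almost every `t > 0`, for `f` with `∫₁^∞ |f(s)| s^{2α-1} ds < ∞`. -/
theorem ek_minus_composition_rl (α : ℝ) (hα : 0 < α) (f : ℝ → ℝ)
    (hmeas : Measurable f)
    (hloc : LocallyIntegrableOn f (Ioi (0 : ℝ)))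
    (hint : IntegrableOn (fun s => |f s| * s ^ (2 * α - 1)) (Ioi (1 : ℝ))) :
    ∀ᵐ t ∂(volume.restrict (Ioi (0 : ℝ))),
      t * EKminus α (fun s => s ^ (-(2 * α) - 1) * EKminus α f s) t
        = 2 ^ (2 * α) * RLminus (2 * α) f t := by
  rw [ae_restrict_iff' measurableSet_Ioi]
  filter_upwards [ae_rl_integrable α hα f hmeas hloc hint] with t ht ht0
  exact ek_comp_of_integrable α hα f hmeas ht0 (ht ht0)
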